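/- Let Θ ∈ [1/2,1] be the supremum of the real parts of the non-trivial zeros of ζ. Fix s₀ ∈ (0,Θ) and ε > 0, and set Δ(x) := Σ_{n ≤ x} Λ(n)/( n^{s₀} log n ) − I((1−s₀) log x). Then Δ(x) = Ω_±(x^{Θ−s₀−ε}): for every X there exist x₁, x₂ ≥ X with Δ(x₁) > x₁^{Θ−s₀−ε} and Δ(x₂) < −x₂^{Θ−s₀−ε}. -/

import Mathlib

open Real
open scoped ArithmeticFunction.vonMangoldt

/-- `I(s) = ∫₀^s (e^v - 1)/v dv`. -/
noncomputable def Ifun (s : ℝ) : ℝ := ∫ v in (0 : ℝ)..s, (Real.exp v - 1) / v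

/-- `Θ`, the supremum of the real parts of the nontrivial zeros of `ζ`. -/
noncomputable def Theta : ℝ :=
  sSup (Complex.re '' {z : ℂ | riemannZeta z = 0 ∧ 0 < z.re ∧ z.re < 1})

/-- `Δ(x) = ∑_{n ≤ x} Λ(n)/(n^{s₀} log n) - I((1-s₀) log x)`. -/
noncomputable def Delta (s₀ x : ℝ) : ℝ :=
  (∑ n ∈ Finset.Icc 1 ⌊x⌋₊, Λ n / ((n : ℝ) ^ s₀ * Real.log n)) -
    Ifun ((1 - s₀) * Real.log x)

open MeasureTheory ProbabilityTheory Filter Topology Set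

/-!
Partial summation and integration by parts give, for `1 < re w` and a constant `C ≠ 0`,
`exp (w ∫₁^∞ Δ(x) x^{-w-1} dx) = C (w + s₀ - 1) ζ(w + s₀) / w`,
whose right-hand side is holomorphic for `0 < re w` and has no zero on the positive real axis.

Suppose `σ Δ(x) ≤ c x^α` eventually, with `σ = ±1`. Then `c x^α - σ Δ(x)` is eventually nonnegative,
so by Landau's theorem its Mellin transform is singular at its real abscissa of convergence. The
logarithm of the right-hand side continues the transform past every real point `> α`, so the
integral converges for `α < re w`. There the right-hand side is an exponential, and so `ζ` has no
zero with real part `> s₀ + α`, contradicting `s₀ + α < Θ`.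
-/

section ComplexAnalysis

lemma isOpen_re_gt (a : ℝ) : IsOpen {w : ℂ | a < w.re} :=
  isOpen_lt continuous_const Complex.continuous_re

lemma ne_ofReal_of_lt_re {a : ℝ} {w : ℂ} (hw : a < w.re) : w ≠ a := by
  rintro rfl
  exact lt_irrefl a hw

lemma eq_of_differentiableOn_of_eq_of_lt_re {f g : ℂ → ℂ} {a b : ℝ}
    (hf : DifferentiableOn ℂ f {w | a < w.re}) (hg : DifferentiableOn ℂ g {w | a < w.re})
    (hfg : ∀ w : ℂ, b < w.re → f w = g w) {w : ℂ} (hw : a < w.re) : f w = g w := by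
  set p : ℝ := max a b + 1
  have hpa : (p : ℂ) ∈ {w : ℂ | a < w.re} := (le_max_left a b).trans_lt (lt_add_one _)
  have hpb : (p : ℂ) ∈ {w : ℂ | b < w.re} := (le_max_right a b).trans_lt (lt_add_one _)
  have hfgp : f =ᶠ[𝓝 (p : ℂ)] g := by
    filter_upwards [(isOpen_re_gt b).mem_nhds hpb] with z hz using hfg z hz
  exact (hf.analyticOnNhd (isOpen_re_gt a)).eqOn_of_preconnected_of_eventuallyEq
    (hg.analyticOnNhd (isOpen_re_gt a)) (convex_halfSpace_re_gt a).isPreconnected hpa hfgp hw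

lemma eq_of_cexp_eq_const {f : ℂ → ℂ} {V : Set ℂ} (hVo : IsOpen V) (hVc : IsPreconnected V)
    (hf : DifferentiableOn ℂ f V) {k : ℂ} (hk : ∀ w ∈ V, Complex.exp (f w) = k)
    {z w : ℂ} (hz : z ∈ V) (hw : w ∈ V) : f z = f w := by
  refine hVo.is_const_of_deriv_eq_zero hVc hf (fun y hy => ?_) hz hw
  have hexp := (hf.differentiableAt (hVo.mem_nhds hy)).hasDerivAt.cexp
  have hconst : HasDerivAt (fun w => Complex.exp (f w)) 0 y :=
    (hasDerivAt_const y k).congr_of_eventuallyEq <| by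
      filter_upwards [hVo.mem_nhds hy] with x hx using hk x hx
  exact (mul_eq_zero.mp (hexp.unique hconst)).resolve_left (Complex.exp_ne_zero _)

lemma exists_analyticAt_cexp_eq {B : ℂ → ℂ} {q : ℂ} (hB : AnalyticAt ℂ B q) (hBq : B q ≠ 0) :
    ∃ L, AnalyticAt ℂ L q ∧ ∀ᶠ w in 𝓝 q, Complex.exp (L w) = B w := by
  have hslit : B q / B q ∈ Complex.slitPlane := by
    rw [div_self hBq]
    exact Complex.one_mem_slitPlane
  refine ⟨fun w => Complex.log (B w / B q) + Complex.log (B q),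
    (hB.div_const.clog hslit).add analyticAt_const, ?_⟩
  filter_upwards [hB.continuousAt.eventually_ne hBq] with w hw
  rw [Complex.exp_add, Complex.exp_log (div_ne_zero hw hBq), Complex.exp_log hBq,
    div_mul_cancel₀ _ hBq]

lemma exists_analyticAt_eventuallyEq_of_cexp_eq {A B : ℂ → ℂ} {U : Set ℂ} {q : ℂ}
    (hUo : IsOpen U) (hUc : Convex ℝ U) (hA : DifferentiableOn ℂ A U)
    (hAB : ∀ w ∈ U, Complex.exp (A w) = B w) (hB : AnalyticAt ℂ B q) (hBq : B q ≠ 0) :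
    ∃ L, AnalyticAt ℂ L q ∧ A =ᶠ[𝓝[U] q] L := by
  obtain ⟨L, hL, hLB⟩ := exists_analyticAt_cexp_eq hB hBq
  obtain ⟨r, hr, hball⟩ := Metric.eventually_nhds_iff_ball.mp (hLB.and hL.eventually_analyticAt)
  set V := Metric.ball q r ∩ U
  have hVo : IsOpen V := Metric.isOpen_ball.inter hUo
  have hVq : V ∈ 𝓝[U] q :=
    inter_mem (mem_nhdsWithin_of_mem_nhds (Metric.ball_mem_nhds q hr)) self_mem_nhdsWithin
  have hdiff : DifferentiableOn ℂ (fun w => A w - L w) V := fun w hw =>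
    ((hA w hw.2).mono inter_subset_right).sub
      (hball w hw.1).2.differentiableAt.differentiableWithinAt
  have hexp : ∀ w ∈ V, Complex.exp (A w - L w) = 1 := fun w hw => by
    rw [Complex.exp_sub, hAB w hw.2, ← (hball w hw.1).1, div_self (Complex.exp_ne_zero _)]
  rcases V.eq_empty_or_nonempty with hV | ⟨a, ha⟩
  · exact ⟨L, hL, mem_of_superset hVq (by simp [hV])⟩
  · refine ⟨fun w => L w + (A a - L a), hL.add analyticAt_const, ?_⟩
    filter_upwards [hVq] with w hw
    rw [← eq_of_cexp_eq_const hVo ((convex_ball q r).inter hUc).isPreconnected hdiff hexp hw ha]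
    ring

end ComplexAnalysis

section Landau

variable {Ω : Type*} [MeasurableSpace Ω] {μ : Measure Ω}

lemma integrable_of_hasSum_of_summable_integral_norm {E : Type*} [NormedAddCommGroup E]
    {F : ℕ → Ω → E} {f : Ω → E} (hF : ∀ n, Integrable (F n) μ)
    (hsum : Summable fun n => ∫ ω, ‖F n ω‖ ∂μ) (hf : ∀ᵐ ω ∂μ, HasSum (F · ω) (f ω)) :
    Integrable f μ := by
  have hmeas : AEStronglyMeasurable f μ :=
    aestronglyMeasurable_of_tendsto_ae atTop
      (fun N => Finset.aestronglyMeasurable_fun_sum (Finset.range N) fun n _ => (hF n).1)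
      (hf.mono fun _ hω => hω.tendsto_sum_nat)
  have hterm (n : ℕ) : ∫⁻ ω, ‖F n ω‖ₑ ∂μ = ENNReal.ofReal (∫ ω, ‖F n ω‖ ∂μ) :=
    (ofReal_integral_norm_eq_lintegral_enorm (hF n)).symm
  refine ⟨hmeas, ?_⟩
  calc ∫⁻ ω, ‖f ω‖ₑ ∂μ ≤ ∫⁻ ω, ∑' n, ‖F n ω‖ₑ ∂μ :=
        lintegral_mono_ae <| hf.mono fun ω hω => by
          rw [← hω.tsum_eq]
          exact enorm_tsum_le_tsum_enorm
    _ = ∑' n, ENNReal.ofReal (∫ ω, ‖F n ω‖ ∂μ) := by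
        rw [lintegral_tsum fun n => (hF n).1.enorm]
        exact tsum_congr hterm
    _ < ⊤ := by
        rw [← ENNReal.ofReal_tsum_of_nonneg (fun n => integral_nonneg fun ω => norm_nonneg _) hsum]
        exact ENNReal.ofReal_lt_top

variable {X : Ω → ℝ}

lemma mem_integrableExpSet_of_le (hXm : AEMeasurable X μ) (hX : ∀ᵐ ω ∂μ, X ω ≤ 0) {t u : ℝ}
    (ht : t ∈ integrableExpSet X μ) (htu : t ≤ u) : u ∈ integrableExpSet X μ := by
  refine Integrable.mono' (integrable_of_mem_integrableExpSet ht)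
    (hXm.const_mul u).exp.aestronglyMeasurable ?_
  filter_upwards [hX] with ω hω
  rw [Real.norm_of_nonneg (Real.exp_pos _).le]
  exact Real.exp_le_exp.mpr (mul_le_mul_of_nonpos_right htu hω)

lemma inv_factorial_smul_pow_smul_iteratedDeriv_complexMGF {a t : ℝ}
    (ha : a ∈ interior (integrableExpSet X μ)) (n : ℕ) :
    (n.factorial : ℂ)⁻¹ • (((a - t : ℝ) : ℂ) - a) ^ n • iteratedDeriv n (complexMGF X μ) a =
      ((∫ ω, (t * -X ω) ^ n / n.factorial * Real.exp (a * X ω) ∂μ : ℝ) : ℂ) := by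
  rw [iteratedDeriv_complexMGF (by simpa using ha), ← integral_complex_ofReal, smul_smul,
    smul_eq_mul, ← integral_const_mul]
  refine integral_congr_ae (ae_of_all _ fun ω => ?_)
  push_cast
  rw [show (a : ℂ) - t - a = -t by ring, show (t : ℂ) * -X ω = -t * X ω by ring, mul_pow]
  ring

-- Landau's theorem: the terms of the Taylor series of `K` at `a`, evaluated at `a - t`, are
-- integrals of nonnegative functions, so convergence of the series is integrability of their sum.
lemma sub_mem_integrableExpSet_of_differentiableOn_ball (hX : ∀ᵐ ω ∂μ, X ω ≤ 0) {a r t : ℝ}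
    (ha : a ∈ interior (integrableExpSet X μ)) {K : ℂ → ℂ}
    (hK : DifferentiableOn ℂ K (Metric.ball (a : ℂ) r))
    (hKX : complexMGF X μ =ᶠ[𝓝 (a : ℂ)] K) (ht0 : 0 ≤ t) (htr : t < r) :
    a - t ∈ integrableExpSet X μ := by
  set F : ℕ → Ω → ℝ := fun n ω => (t * -X ω) ^ n / n.factorial * Real.exp (a * X ω) with hF
  have hFint (n : ℕ) : Integrable (F n) μ := by
    refine ((integrable_pow_mul_exp_of_mem_interior_integrableExpSet ha n).const_mul
      ((-t) ^ n / n.factorial)).congr (ae_of_all _ fun ω => ?_)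
    simp only [hF, mul_pow]
    ring
  have hFnorm (n : ℕ) : ∫ ω, ‖F n ω‖ ∂μ = ∫ ω, F n ω ∂μ := by
    refine integral_congr_ae (hX.mono fun ω hω => Real.norm_of_nonneg ?_)
    have : 0 ≤ t * -X ω := mul_nonneg ht0 (neg_nonneg.mpr hω)
    positivity
  have hFexp (ω : Ω) : HasSum (F · ω) (Real.exp ((a - t) * X ω)) := by
    have h := (NormedSpace.expSeries_div_hasSum_exp (𝔸 := ℝ) (t * -X ω)).mul_right
      (Real.exp (a * X ω))
    rwa [← Real.exp_eq_exp_ℝ, ← Real.exp_add, show t * -X ω + a * X ω = (a - t) * X ω by ring] at h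
  have hFsum : Summable fun n => ∫ ω, F n ω ∂μ := by
    have htaylor := Complex.hasSum_taylorSeries_on_ball hK (z := ((a - t : ℝ) : ℂ))
      (by simpa [abs_of_nonneg ht0] using htr)
    refine Complex.summable_ofReal.mp (htaylor.summable.congr fun n => ?_)
    rw [← hKX.iteratedDeriv_eq n, inv_factorial_smul_pow_smul_iteratedDeriv_complexMGF ha]
  exact integrable_of_hasSum_of_summable_integral_norm hFint (by simpa only [hFnorm] using hFsum)
    (ae_of_all _ hFexp)

lemma exists_lt_mem_integrableExpSet_of_analyticAt (hX : ∀ᵐ ω ∂μ, X ω ≤ 0) {q : ℝ}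
    (hq : Ioi q ⊆ integrableExpSet X μ) {K : ℂ → ℂ} (hK : AnalyticAt ℂ K q)
    (hKX : complexMGF X μ =ᶠ[𝓝[{w | q < w.re}] (q : ℂ)] K) :
    ∃ t < q, t ∈ integrableExpSet X μ := by
  obtain ⟨r, hr, hball⟩ := Metric.eventually_nhds_iff_ball.mp
    (hK.eventually_analyticAt.and (eventually_nhdsWithin_iff.mp hKX))
  set a : ℝ := q + r / 4 with ha
  have hqa : q < a := by linarith
  have hdist : dist (a : ℂ) q = r / 4 := by
    rw [Complex.dist_of_im_eq (by simp), Complex.ofReal_re, Complex.ofReal_re, Real.dist_eq, ha,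
      add_sub_cancel_left, abs_of_pos (by positivity)]
  refine ⟨a - 3 * r / 8, by linarith, ?_⟩
  refine sub_mem_integrableExpSet_of_differentiableOn_ball hX (interior_maximal hq isOpen_Ioi hqa)
    (K := K) (r := r / 2) (fun w hw => ?_) ?_ (by positivity) (by linarith)
  · have hwq : w ∈ Metric.ball (q : ℂ) r := Metric.ball_subset_ball' (by linarith) hw
    exact (hball w hwq).1.differentiableAt.differentiableWithinAt
  · have haq : (a : ℂ) ∈ Metric.ball (q : ℂ) r := by
      rw [Metric.mem_ball, hdist]
      linarith
    filter_upwards [Metric.isOpen_ball.mem_nhds haq, (isOpen_re_gt q).mem_nhds (by simpa using hqa)]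
      with w hwq hqw using (hball w hwq).2 hqw

lemma Ioi_subset_integrableExpSet_of_forall_analyticAt (hXm : AEMeasurable X μ)
    (hX : ∀ᵐ ω ∂μ, X ω ≤ 0) (hne : (integrableExpSet X μ).Nonempty) {α : ℝ}
    (hext : ∀ q, α < q → Ioi q ⊆ integrableExpSet X μ →
      ∃ K : ℂ → ℂ, AnalyticAt ℂ K q ∧ complexMGF X μ =ᶠ[𝓝[{w | q < w.re}] (q : ℂ)] K) :
    Ioi α ⊆ integrableExpSet X μ := by
  intro p hp
  by_contra hpX
  have hlower : p ∈ lowerBounds (integrableExpSet X μ) := fun t ht =>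
    le_of_not_gt fun htp => hpX (mem_integrableExpSet_of_le hXm hX ht htp.le)
  set q := sInf (integrableExpSet X μ)
  have hq : Ioi q ⊆ integrableExpSet X μ := fun t ht => by
    obtain ⟨u, hu, hut⟩ := exists_lt_of_csInf_lt hne ht
    exact mem_integrableExpSet_of_le hXm hX hu hut.le
  obtain ⟨K, hK, hKX⟩ := hext q (lt_of_lt_of_le hp (le_csInf hne hlower)) hq
  obtain ⟨t, htq, ht⟩ := exists_lt_mem_integrableExpSet_of_analyticAt hX hq hK hKX
  exact htq.not_ge (csInf_le ⟨p, hlower⟩ ht)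

lemma differentiableOn_complexMGF_of_Ioi_subset {a : ℝ} (ha : Ioi a ⊆ integrableExpSet X μ) :
    DifferentiableOn ℂ (complexMGF X μ) {w | a < w.re} :=
  differentiableOn_complexMGF.mono fun _ hw => interior_maximal ha isOpen_Ioi hw

theorem ne_zero_of_cexp_add_mul_complexMGF_eq (hXm : AEMeasurable X μ) (hX : ∀ᵐ ω ∂μ, X ω ≤ 0)
    {u v H : ℂ → ℂ} {α b : ℝ} (hb : Ioi b ⊆ integrableExpSet X μ)
    (hu : DifferentiableOn ℂ u {w | α < w.re}) (hv : DifferentiableOn ℂ v {w | α < w.re})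
    (hH : DifferentiableOn ℂ H {w | α < w.re}) (hv0 : ∀ x : ℝ, α < x → v x ≠ 0)
    (hH0 : ∀ x : ℝ, α < x → H x ≠ 0)
    (hexp : ∀ w : ℂ, b < w.re → Complex.exp (u w + v w * complexMGF X μ w) = H w)
    {w : ℂ} (hw : α < w.re) : H w ≠ 0 := by
  set A : ℂ → ℂ := fun w => u w + v w * complexMGF X μ w with hA
  have hAdiff {q : ℝ} (hαq : α ≤ q) (hq : Ioi q ⊆ integrableExpSet X μ) :
      DifferentiableOn ℂ A {w | q < w.re} := by
    have hsub : {w : ℂ | q < w.re} ⊆ {w | α < w.re} := fun _ hz => lt_of_le_of_lt hαq hz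
    exact (hu.mono hsub).add ((hv.mono hsub).mul (differentiableOn_complexMGF_of_Ioi_subset hq))
  have hAexp {q : ℝ} (hαq : α ≤ q) (hq : Ioi q ⊆ integrableExpSet X μ) {w : ℂ} (hw : q < w.re) :
      Complex.exp (A w) = H w :=
    eq_of_differentiableOn_of_eq_of_lt_re (hAdiff hαq hq).cexp
      (hH.mono fun _ hz => lt_of_le_of_lt hαq hz) hexp hw
  have hα : Ioi α ⊆ integrableExpSet X μ := by
    refine Ioi_subset_integrableExpSet_of_forall_analyticAt hXm hX (nonempty_Ioi.mono hb)
      fun q hαq hq => ?_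
    have hmem : {w : ℂ | α < w.re} ∈ 𝓝 (q : ℂ) := (isOpen_re_gt α).mem_nhds hαq
    obtain ⟨L, hL, hAL⟩ := exists_analyticAt_eventuallyEq_of_cexp_eq (isOpen_re_gt q)
      (convex_halfSpace_re_gt q) (hAdiff hαq.le hq) (fun _ => hAexp hαq.le hq) (hH.analyticAt hmem)
      (hH0 q hαq)
    have hvq := hv.analyticAt hmem
    refine ⟨fun w => (L w - u w) / v w, (hL.sub (hu.analyticAt hmem)).div hvq (hv0 q hαq), ?_⟩
    filter_upwards [hAL, nhdsWithin_le_nhds (hvq.continuousAt.eventually_ne (hv0 q hαq))]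
      with w hw hvw
    rw [← hw, hA, add_sub_cancel_left, mul_div_cancel_left₀ _ hvw]
  rw [← hAexp le_rfl hα hw]
  exact Complex.exp_ne_zero _

end Landau

section MellinTail

/-- The truncated Mellin transform `∫₁^∞ g(x) x^{-w-1} dx`: the Mellin transform at `-w` of `g`
restricted to `(1, ∞)`, in the normalisation produced by partial summation of a Dirichlet series
at `w`. -/
noncomputable def mellinTail (g : ℝ → ℝ) (w : ℂ) : ℂ :=
  ∫ x in Ioi (1 : ℝ), (g x : ℂ) * (x : ℂ) ^ (-(w + 1))

/-- Absolute convergence of the integral defining `mellinTail g w`. -/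
def MellinTailConvergent (g : ℝ → ℝ) (w : ℂ) : Prop :=
  IntegrableOn (fun x : ℝ => (g x : ℂ) * (x : ℂ) ^ (-(w + 1))) (Ioi 1)

/-- The measure `g(x) dx / x` on `(1, ∞)`. For `g ≥ 0` the complex moment generating function of
`-log` under it is `mellinTail g`; this makes Landau's theorem applicable to `mellinTail g`. -/
noncomputable def mellinTailMeasure (g : ℝ → ℝ) : Measure ℝ :=
  (volume.restrict (Ioi 1)).withDensity fun x => ENNReal.ofReal (g x / x)

variable {f g : ℝ → ℝ} {w : ℂ} {a C : ℝ}

lemma mellinTailConvergent_of_abs_le (hg : Measurable g) (hgC : ∀ x, 1 < x → |g x| ≤ C * x ^ a)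
    (hw : a < w.re) : MellinTailConvergent g w := by
  have hdom : IntegrableOn (fun x : ℝ => C * x ^ (a - w.re - 1)) (Ioi 1) :=
    (integrableOn_Ioi_rpow_of_lt (by linarith) zero_lt_one).const_mul C
  have hmeas : Measurable fun x : ℝ => (g x : ℂ) * (x : ℂ) ^ (-(w + 1)) := by fun_prop
  refine hdom.mono' hmeas.aestronglyMeasurable ?_
  filter_upwards [ae_restrict_mem measurableSet_Ioi] with x hx
  have hx0 : 0 < x := zero_lt_one.trans hx
  calc ‖(g x : ℂ) * (x : ℂ) ^ (-(w + 1))‖ = |g x| * x ^ (-w.re - 1) := by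
        rw [norm_mul, Complex.norm_cpow_eq_rpow_re_of_pos hx0, Complex.norm_real, Real.norm_eq_abs]
        congr 2
        rw [Complex.neg_re, Complex.add_re, Complex.one_re]
        ring
    _ ≤ C * x ^ a * x ^ (-w.re - 1) := by gcongr; exact hgC x hx
    _ = C * x ^ (a - w.re - 1) := by
        rw [mul_assoc, ← Real.rpow_add hx0]
        congr 2
        ring

lemma mellinTailConvergent_rpow (hw : a < w.re) : MellinTailConvergent (fun x => x ^ a) w :=
  mellinTailConvergent_of_abs_le (C := 1) (by fun_prop) (fun x hx => by
    rw [one_mul, abs_of_nonneg (Real.rpow_nonneg (by linarith) a)]) hw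

lemma mellinTailConvergent_const_mul (c : ℝ) (hg : MellinTailConvergent g w) :
    MellinTailConvergent (fun x => c * g x) w := by
  have hcg := Integrable.const_mul hg (c : ℂ)
  simpa only [MellinTailConvergent, IntegrableOn, Complex.ofReal_mul, mul_assoc] using hcg

lemma mellinTailConvergent_sub (hf : MellinTailConvergent f w) (hg : MellinTailConvergent g w) :
    MellinTailConvergent (fun x => f x - g x) w := by
  have hfg := Integrable.sub hf hg
  simpa only [MellinTailConvergent, IntegrableOn, Complex.ofReal_sub, sub_mul, Pi.sub_def] using hfg

lemma mellinTail_congr (hfg : ∀ x, 1 < x → f x = g x) (w : ℂ) :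
    mellinTail f w = mellinTail g w :=
  setIntegral_congr_fun measurableSet_Ioi fun x hx => by simp only [hfg x hx]

lemma mellinTail_const_mul (c : ℝ) (g : ℝ → ℝ) (w : ℂ) :
    mellinTail (fun x => c * g x) w = c * mellinTail g w := by
  simp only [mellinTail, Complex.ofReal_mul, mul_assoc, integral_const_mul]

lemma mellinTail_sub (hf : MellinTailConvergent f w) (hg : MellinTailConvergent g w) :
    mellinTail (fun x => f x - g x) w = mellinTail f w - mellinTail g w := by
  simp only [mellinTail, Complex.ofReal_sub, sub_mul]
  exact integral_sub hf hg

lemma mellinTail_rpow (hw : a < w.re) : mellinTail (fun x => x ^ a) w = 1 / (w - a) := by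
  have hpow : ∀ x ∈ Ioi (1 : ℝ),
      ((x ^ a : ℝ) : ℂ) * (x : ℂ) ^ (-(w + 1)) = (x : ℂ) ^ ((a : ℂ) - w - 1) := fun x hx => by
    have hx0 : (0 : ℝ) < x := zero_lt_one.trans hx
    rw [Complex.ofReal_cpow hx0.le, ← Complex.cpow_add _ _ (Complex.ofReal_ne_zero.mpr hx0.ne')]
    congr 1
    ring
  have hre : ((a : ℂ) - w - 1).re < -1 := by
    simp only [Complex.sub_re, Complex.ofReal_re, Complex.one_re]
    linarith
  rw [mellinTail, setIntegral_congr_fun measurableSet_Ioi hpow,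
    integral_Ioi_cpow_of_lt hre zero_lt_one, sub_add_cancel, Complex.ofReal_one, Complex.one_cpow,
    ← neg_sub w (a : ℂ), div_neg, neg_div, neg_neg]

lemma mul_mellinTail_eq_add_mellinTail (hcont : ContinuousAt f 1)
    (hderiv : ∀ x, 1 < x → HasDerivAt f (g x / x) x) (hfC : ∀ x, 1 < x → |f x| ≤ C * x ^ a)
    (hw : a < w.re) (hf : MellinTailConvergent f w) (hg : MellinTailConvergent g w) :
    w * mellinTail f w = f 1 + mellinTail g w := by
  have hcontw : ContinuousWithinAt (fun x : ℝ => (f x : ℂ) * (x : ℂ) ^ (-w)) (Ici 1) 1 :=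
    ContinuousAt.continuousWithinAt <|
      (Complex.continuous_ofReal.continuousAt.comp hcont).mul
        (Complex.continuousAt_ofReal_cpow_const 1 (-w) (Or.inr one_ne_zero))
  have hderivw : ∀ x ∈ Ioi (1 : ℝ), HasDerivAt (fun x : ℝ => (f x : ℂ) * (x : ℂ) ^ (-w))
      ((g x : ℂ) * (x : ℂ) ^ (-(w + 1)) - w * ((f x : ℂ) * (x : ℂ) ^ (-(w + 1)))) x := by
    intro x hx
    have hx0 : (0 : ℝ) < x := zero_lt_one.trans hx
    have hpow : HasDerivAt (fun x : ℝ => (x : ℂ) ^ (-w)) (-w * (x : ℂ) ^ (-w - 1)) x := by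
      simpa using ((hasDerivAt_id (x : ℂ)).cpow_const (c := -w) (by simp [hx0])).comp_ofReal
    refine ((hderiv x hx).ofReal_comp.mul hpow).congr_deriv ?_
    rw [neg_add', Complex.cpow_sub _ _ (Complex.ofReal_ne_zero.mpr hx0.ne'), Complex.cpow_one]
    push_cast
    ring
  have htendsto : Tendsto (fun x : ℝ => (f x : ℂ) * (x : ℂ) ^ (-w)) atTop (𝓝 0) := by
    have hdecay := (tendsto_rpow_neg_atTop (sub_pos.mpr hw)).const_mul C
    rw [mul_zero] at hdecay
    refine squeeze_zero_norm' ?_ hdecay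
    filter_upwards [eventually_gt_atTop 1] with x hx
    have hx0 : 0 < x := zero_lt_one.trans hx
    rw [norm_mul, Complex.norm_cpow_eq_rpow_re_of_pos hx0, Complex.norm_real, Real.norm_eq_abs,
      neg_sub, Complex.neg_re, sub_eq_add_neg, Real.rpow_add hx0, ← mul_assoc]
    gcongr
    exact hfC x hx
  have hparts := integral_Ioi_of_hasDerivAt_of_tendsto hcontw hderivw (hg.sub (hf.const_mul w))
    htendsto
  rw [integral_sub hg (hf.const_mul w), integral_const_mul, Complex.ofReal_one, Complex.one_cpow,
    mul_one, zero_sub] at hparts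
  unfold mellinTail
  linear_combination -hparts

lemma neg_log_le_zero_ae_mellinTailMeasure (g : ℝ → ℝ) :
    ∀ᵐ x ∂mellinTailMeasure g, (-Real.log) x ≤ 0 := by
  refine (withDensity_absolutelyContinuous _ _).ae_le ?_
  filter_upwards [ae_restrict_mem measurableSet_Ioi] with x hx
  exact neg_nonpos.mpr (Real.log_nonneg (le_of_lt hx))

lemma aemeasurable_neg_log_mellinTailMeasure (g : ℝ → ℝ) :
    AEMeasurable (-Real.log) (mellinTailMeasure g) :=
  Real.measurable_log.neg.aemeasurable

lemma toNNReal_smul_cexp_mul_neg_log {x : ℝ} (hx : 1 < x) (hgx : 0 ≤ g x) (w : ℂ) :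
    (g x / x).toNNReal • Complex.exp (w * ((-Real.log) x : ℝ)) =
      (g x : ℂ) * (x : ℂ) ^ (-(w + 1)) := by
  have hx0 : 0 < x := zero_lt_one.trans hx
  have hxc : (x : ℂ) ≠ 0 := Complex.ofReal_ne_zero.mpr hx0.ne'
  have hexp : Complex.exp (w * ((-Real.log) x : ℝ)) = (x : ℂ) ^ (-w) := by
    rw [Complex.cpow_def_of_ne_zero hxc, ← Complex.ofReal_log hx0.le, Pi.neg_apply]
    congr 1
    push_cast
    ring
  rw [NNReal.smul_def, Real.coe_toNNReal _ (div_nonneg hgx hx0.le), Complex.real_smul, hexp,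
    neg_add', Complex.cpow_sub _ _ hxc, Complex.cpow_one, Complex.ofReal_div]
  ring

lemma integral_mellinTailMeasure (hg : Measurable g) (h : ℝ → ℂ) :
    ∫ x, h x ∂mellinTailMeasure g = ∫ x in Ioi (1 : ℝ), (g x / x).toNNReal • h x :=
  integral_withDensity_eq_integral_smul (by fun_prop : Measurable fun x => (g x / x).toNNReal) h

lemma complexMGF_neg_log_mellinTailMeasure (hg : Measurable g) (hg0 : ∀ x, 1 < x → 0 ≤ g x) :
    complexMGF (-Real.log) (mellinTailMeasure g) = mellinTail g := by
  ext w
  rw [complexMGF, integral_mellinTailMeasure hg]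
  exact setIntegral_congr_fun measurableSet_Ioi fun x hx =>
    toNNReal_smul_cexp_mul_neg_log hx (hg0 x hx) w

lemma mem_integrableExpSet_neg_log_mellinTailMeasure (hg : Measurable g)
    (hg0 : ∀ x, 1 < x → 0 ≤ g x) {t : ℝ} :
    t ∈ integrableExpSet (-Real.log) (mellinTailMeasure g) ↔ MellinTailConvergent g t := by
  have hcexp : Measurable fun x : ℝ => Complex.exp (t * ((-Real.log) x : ℝ)) := by
    simp only [Pi.neg_apply]
    fun_prop
  have hnorm : t ∈ integrableExpSet (-Real.log) (mellinTailMeasure g) ↔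
      Integrable (fun x => Complex.exp (t * ((-Real.log) x : ℝ))) (mellinTailMeasure g) := by
    rw [← integrable_norm_iff hcexp.aestronglyMeasurable]
    simp [integrableExpSet, Complex.norm_exp]
  rw [hnorm]
  refine (integrable_withDensity_iff_integrable_smul
    (by fun_prop : Measurable fun x => (g x / x).toNNReal)).trans ?_
  exact integrableOn_congr_fun
    (fun x hx => toNNReal_smul_cexp_mul_neg_log hx (hg0 x hx) t) measurableSet_Ioi

lemma Ioi_subset_integrableExpSet_neg_log (hg : Measurable g) (hg0 : ∀ x, 1 < x → 0 ≤ g x)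
    (hgconv : ∀ t : ℝ, a < t → MellinTailConvergent g t) :
    Ioi a ⊆ integrableExpSet (-Real.log) (mellinTailMeasure g) := fun t ht =>
  (mem_integrableExpSet_neg_log_mellinTailMeasure hg hg0).mpr (hgconv t ht)

lemma differentiableOn_mellinTail (hg : Measurable g) (hg0 : ∀ x, 1 < x → 0 ≤ g x)
    (hgconv : ∀ t : ℝ, a < t → MellinTailConvergent g t) :
    DifferentiableOn ℂ (mellinTail g) {w | a < w.re} := by
  rw [← complexMGF_neg_log_mellinTailMeasure hg hg0]
  exact differentiableOn_complexMGF_of_Ioi_subset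
    (Ioi_subset_integrableExpSet_neg_log hg hg0 hgconv)

lemma hasDerivAt_mellinTail (hg : Measurable g) (hg0 : ∀ x, 1 < x → 0 ≤ g x)
    (hgconv : ∀ t : ℝ, a < t → MellinTailConvergent g t) (hw : a < w.re) :
    HasDerivAt (mellinTail g) (mellinTail (fun x => -Real.log x * g x) w) w := by
  have hderiv := hasDerivAt_complexMGF (interior_maximal
    (Ioi_subset_integrableExpSet_neg_log hg hg0 hgconv) isOpen_Ioi hw)
  rw [complexMGF_neg_log_mellinTailMeasure hg hg0, integral_mellinTailMeasure hg] at hderiv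
  refine hderiv.congr_deriv (setIntegral_congr_fun measurableSet_Ioi fun x hx => ?_)
  simp only
  rw [mul_comm (((-Real.log) x : ℝ) : ℂ), ← smul_mul_assoc,
    toNNReal_smul_cexp_mul_neg_log hx (hg0 x hx), Pi.neg_apply]
  push_cast
  ring

lemma exists_nonneg_mellinTail_ofReal_eq (hg0 : ∀ x, 1 < x → 0 ≤ g x) (t : ℝ) :
    ∃ m : ℝ, 0 ≤ m ∧ mellinTail g t = m := by
  refine ⟨∫ x in Ioi (1 : ℝ), g x * x ^ (-(t + 1)),
    setIntegral_nonneg measurableSet_Ioi fun x hx =>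
      mul_nonneg (hg0 x hx) (Real.rpow_nonneg (zero_le_one.trans (le_of_lt hx)) _), ?_⟩
  rw [← integral_complex_ofReal]
  refine setIntegral_congr_fun measurableSet_Ioi fun x hx => ?_
  rw [Complex.ofReal_mul, Complex.ofReal_cpow (zero_le_one.trans (le_of_lt hx))]
  push_cast
  rfl

lemma exists_forall_le_mul_rpow {α β M c : ℝ} (hα : 0 ≤ α)
    (hgM : ∀ x, 1 < x → |g x| ≤ M * x ^ β) (hgc : ∀ᶠ x in atTop, g x ≤ c * x ^ α) :
    ∃ c', ∀ x, 1 < x → g x ≤ c' * x ^ α := by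
  obtain ⟨X, hX⟩ := eventually_atTop.mp hgc
  refine ⟨max c (|M| * max 1 X ^ |β|), fun x hx => ?_⟩
  have hpow : 1 ≤ x ^ α := Real.one_le_rpow hx.le hα
  rcases le_or_gt X x with hXx | hxX
  · refine (hX x hXx).trans ?_
    gcongr
    exact le_max_left _ _
  · have hbound : g x ≤ |M| * max 1 X ^ |β| := calc
      g x ≤ M * x ^ β := (le_abs_self _).trans (hgM x hx)
      _ ≤ |M| * x ^ |β| := by
        gcongr
        · exact le_abs_self M
        · exact hx.le
        · exact le_abs_self β
      _ ≤ |M| * max 1 X ^ |β| := by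
        gcongr
        exact hxX.le.trans (le_max_right _ _)
    calc g x ≤ max c (|M| * max 1 X ^ |β|) := hbound.trans (le_max_right _ _)
      _ ≤ max c (|M| * max 1 X ^ |β|) * x ^ α :=
        le_mul_of_one_le_right (le_max_of_le_right (by positivity)) hpow

lemma ne_zero_of_cexp_mul_mellinTail_eq {D : ℝ → ℝ} {H : ℂ → ℂ} {k : ℂ} {α β c : ℝ}
    (hD : Measurable D) (hDconv : ∀ w : ℂ, β < w.re → MellinTailConvergent D w) (hα : 0 ≤ α)
    (hDc : ∀ x, 1 < x → D x ≤ c * x ^ α) (hk : k ≠ 0)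
    (hH : DifferentiableOn ℂ H {w | α < w.re}) (hH0 : ∀ x : ℝ, α < x → H x ≠ 0)
    (hexp : ∀ w : ℂ, β < w.re → Complex.exp (k * (w * mellinTail D w)) = H w)
    (hw : α < w.re) : H w ≠ 0 := by
  set g : ℝ → ℝ := fun x => c * x ^ α - D x
  have hg : Measurable g := by fun_prop
  have hg0 : ∀ x, 1 < x → 0 ≤ g x := fun x hx => sub_nonneg.mpr (hDc x hx)
  have hcpow {w : ℂ} (hw : α < w.re) : MellinTailConvergent (fun x => c * x ^ α) w :=
    mellinTailConvergent_const_mul c (mellinTailConvergent_rpow hw)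
  have hgconv (t : ℝ) (ht : max α β < t) : MellinTailConvergent g t :=
    mellinTailConvergent_sub (hcpow ((le_max_left α β).trans_lt ht))
      (hDconv t ((le_max_right α β).trans_lt ht))
  have hne {w : ℂ} (hw : α < w.re) : w - α ≠ 0 := sub_ne_zero.mpr (ne_ofReal_of_lt_re hw)
  refine ne_zero_of_cexp_add_mul_complexMGF_eq (aemeasurable_neg_log_mellinTailMeasure g)
    (neg_log_le_zero_ae_mellinTailMeasure g) (Ioi_subset_integrableExpSet_neg_log hg hg0 hgconv)
    (u := fun w => k * (w * (c * (1 / (w - α))))) (v := fun w => -(k * w)) ?_ (by fun_prop) hH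
    (fun x hx => ?_) hH0 (fun w hw => ?_) hw
  · exact fun w hw => by fun_prop (disch := exact hne hw)
  · exact neg_ne_zero.mpr (mul_ne_zero hk (Complex.ofReal_ne_zero.mpr (hα.trans_lt hx).ne'))
  · have hwα := (le_max_left α β).trans_lt hw
    have hwβ := (le_max_right α β).trans_lt hw
    rw [complexMGF_neg_log_mellinTailMeasure hg hg0, mellinTail_sub (hcpow hwα) (hDconv w hwβ),
      mellinTail_const_mul, mellinTail_rpow hwα, ← hexp w hwβ]
    congr 1
    ring

theorem frequently_mul_rpow_lt_of_cexp_mul_mellinTail_eq {D : ℝ → ℝ} {H : ℂ → ℂ} {k ρ : ℂ}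
    {α β M : ℝ} (hD : Measurable D) (hDM : ∀ x, 1 < x → |D x| ≤ M * x ^ β) (hα : 0 ≤ α)
    (hk : k ≠ 0) (hH : DifferentiableOn ℂ H {w | α < w.re}) (hH0 : ∀ x : ℝ, α < x → H x ≠ 0)
    (hexp : ∀ w : ℂ, β < w.re → Complex.exp (k * (w * mellinTail D w)) = H w)
    (hρα : α < ρ.re) (hρ : H ρ = 0) (c : ℝ) : ∃ᶠ x in atTop, c * x ^ α < D x := by
  by_contra hle
  simp only [not_frequently, not_lt] at hle
  obtain ⟨c', hc'⟩ := exists_forall_le_mul_rpow hα hDM hle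
  exact ne_zero_of_cexp_mul_mellinTail_eq hD
    (fun w hw => mellinTailConvergent_of_abs_le hD hDM hw) hα hc' hk hH hH0 hexp hρα hρ

end MellinTail

section SummatoryFunction

/-- The summatory function `x ↦ ∑_{n ≤ x} f(n)` of `f`, ignoring `f 0` as Dirichlet series do. -/
noncomputable def summatory (f : ℕ → ℝ) (x : ℝ) : ℝ :=
  ∑ n ∈ Finset.Icc 1 ⌊x⌋₊, f n

variable {f : ℕ → ℝ} {C : ℝ}

lemma measurable_summatory (f : ℕ → ℝ) : Measurable (summatory f) :=
  (measurable_from_nat (f := fun m : ℕ => ∑ n ∈ Finset.Icc 1 m, f n)).comp Nat.measurable_floor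

lemma sum_Icc_abs_le_mul (hf : ∀ n, |f n| ≤ C) (m : ℕ) :
    ∑ n ∈ Finset.Icc 1 m, |f n| ≤ C * m := by
  simpa [mul_comm] using Finset.sum_le_card_nsmul (Finset.Icc 1 m) (|f ·|) C fun n _ => hf n

lemma abs_summatory_le_mul_rpow_one (hf : ∀ n, |f n| ≤ C) {x : ℝ} (hx : 0 ≤ x) :
    |summatory f x| ≤ C * x ^ (1 : ℝ) := by
  have hC : 0 ≤ C := (abs_nonneg _).trans (hf 0)
  calc |summatory f x| ≤ ∑ n ∈ Finset.Icc 1 ⌊x⌋₊, |f n| := Finset.abs_sum_le_sum_abs _ _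
    _ ≤ C * ⌊x⌋₊ := sum_Icc_abs_le_mul hf _
    _ ≤ C * x ^ (1 : ℝ) := by
        rw [Real.rpow_one]
        gcongr
        exact Nat.floor_le hx

lemma mellinTailConvergent_summatory (hf : ∀ n, |f n| ≤ C) {w : ℂ} (hw : 1 < w.re) :
    MellinTailConvergent (summatory f) w :=
  mellinTailConvergent_of_abs_le (measurable_summatory f)
    (fun _ hx => abs_summatory_le_mul_rpow_one hf (zero_le_one.trans hx.le)) hw

lemma LSeries_eq_mul_mellinTail_summatory (hf : ∀ n, |f n| ≤ C) {w : ℂ} (hw : 1 < w.re) :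
    LSeries (fun n => (f n : ℂ)) w = w * mellinTail (summatory f) w := by
  have hO : (fun n : ℕ => ∑ k ∈ Finset.Icc 1 n, ‖(f k : ℂ)‖) =O[atTop]
      fun n => (n : ℝ) ^ (1 : ℝ) := by
    refine Asymptotics.IsBigO.of_bound C (Eventually.of_forall fun n => ?_)
    simpa [abs_of_nonneg (Finset.sum_nonneg fun k _ => abs_nonneg (f k))] using
      sum_Icc_abs_le_mul hf n
  rw [LSeries_eq_mul_integral' _ zero_le_one hw hO]
  simp only [mellinTail, summatory, Complex.ofReal_sum]

end SummatoryFunction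

section Zeta

lemma riemannZeta₁_eq_sub_one_mul {s : ℂ} (hs : s ≠ 1) :
    riemannZeta₁ s = (s - 1) * riemannZeta s := by
  rw [riemannZeta_eq_inv_sub_mul hs, mul_inv_cancel_left₀ (sub_ne_zero.mpr hs)]

lemma summatory_one_eq_sub_fract {x : ℝ} (hx : 0 ≤ x) :
    summatory (fun _ => 1) x = x ^ (1 : ℝ) - Int.fract x := by
  simp [summatory, natCast_floor_eq_intCast_floor hx]

lemma abs_fract_le_mul_rpow_zero (x : ℝ) : |Int.fract x| ≤ 1 * x ^ (0 : ℝ) := by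
  rw [Int.abs_fract, Real.rpow_zero, mul_one]
  exact (Int.fract_lt_one x).le

lemma mellinTailConvergent_fract {w : ℂ} (hw : 0 < w.re) : MellinTailConvergent Int.fract w :=
  mellinTailConvergent_of_abs_le measurable_fract (fun x _ => abs_fract_le_mul_rpow_zero x) hw

lemma riemannZeta₁_eq_of_one_lt_re {w : ℂ} (hw : 1 < w.re) :
    riemannZeta₁ w = w - w * (w - 1) * mellinTail Int.fract w := by
  have hw1 : w ≠ 1 := by exact_mod_cast ne_ofReal_of_lt_re hw
  have hzeta : riemannZeta w = LSeries (fun _ => ((1 : ℝ) : ℂ)) w := by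
    rw [← LSeries_one_eq_riemannZeta hw, Complex.ofReal_one]
    rfl
  rw [riemannZeta₁_eq_sub_one_mul hw1, hzeta,
    LSeries_eq_mul_mellinTail_summatory (C := 1) (by simp) hw,
    mellinTail_congr fun _ hx => summatory_one_eq_sub_fract (zero_le_one.trans hx.le),
    mellinTail_sub (mellinTailConvergent_rpow hw)
      (mellinTailConvergent_fract (zero_lt_one.trans hw)), mellinTail_rpow hw, Complex.ofReal_one]
  have := sub_ne_zero.mpr hw1
  field_simp

theorem riemannZeta₁_eq_of_re_pos {s : ℂ} (hs : 0 < s.re) :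
    riemannZeta₁ s = s - s * (s - 1) * mellinTail Int.fract s := by
  have hfract : DifferentiableOn ℂ (mellinTail Int.fract) {w | 0 < w.re} :=
    differentiableOn_mellinTail measurable_fract (fun x _ => Int.fract_nonneg x)
      fun t ht => mellinTailConvergent_fract ht
  exact eq_of_differentiableOn_of_eq_of_lt_re (b := 1) differentiable_riemannZeta₁.differentiableOn
    (by fun_prop) (fun _ => riemannZeta₁_eq_of_one_lt_re) hs

theorem riemannZeta₁_ofReal_ne_zero {x : ℝ} (hx : 0 < x) : riemannZeta₁ x ≠ 0 := by
  rcases lt_trichotomy x 1 with hx1 | rfl | hx1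
  · obtain ⟨m, hm, hfract⟩ :=
      exists_nonneg_mellinTail_ofReal_eq (g := Int.fract) (fun y _ => Int.fract_nonneg y) x
    have hpos : 0 < x - x * (x - 1) * m := by
      nlinarith [mul_nonneg (mul_nonneg hx.le (sub_nonneg.mpr hx1.le)) hm]
    rw [riemannZeta₁_eq_of_re_pos (by simpa using hx), hfract]
    exact_mod_cast hpos.ne'
  · simp
  · have hxc : (x : ℂ) ≠ 1 := by exact_mod_cast hx1.ne'
    rw [riemannZeta₁_eq_sub_one_mul hxc]
    exact mul_ne_zero (sub_ne_zero.mpr hxc) (riemannZeta_ne_zero_of_one_lt_re (by simpa using hx1))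

end Zeta

section ExponentialIntegral

lemma continuous_dslope_exp : Continuous (dslope Real.exp 0) :=
  continuous_iff_continuousAt.mpr fun v => by
    rcases eq_or_ne v 0 with rfl | hv
    · exact continuousAt_dslope_same.mpr Real.differentiableAt_exp
    · exact (continuousAt_dslope_of_ne hv).mpr Real.continuous_exp.continuousAt

lemma mul_dslope_exp (v : ℝ) : v * dslope Real.exp 0 v = Real.exp v - 1 := by
  simpa using sub_smul_dslope Real.exp 0 v

lemma dslope_exp_nonneg (v : ℝ) : 0 ≤ dslope Real.exp 0 v := by
  rcases lt_trichotomy v 0 with hv | rfl | hv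
  · nlinarith [mul_dslope_exp v, Real.exp_lt_one_iff.mpr hv]
  · simp [dslope_same]
  · nlinarith [mul_dslope_exp v, Real.one_lt_exp_iff.mpr hv]

lemma dslope_exp_le_exp {v : ℝ} (hv : 0 ≤ v) : dslope Real.exp 0 v ≤ Real.exp v := by
  rcases hv.eq_or_lt with rfl | hv
  · simp [dslope_same]
  · refine le_of_mul_le_mul_left ?_ hv
    rw [mul_dslope_exp, mul_comm]
    simpa using Real.self_sub_one_le_mul_log (Real.exp_pos v).le

lemma Ifun_eq_integral_dslope (s : ℝ) : Ifun s = ∫ v in (0 : ℝ)..s, dslope Real.exp 0 v := by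
  refine intervalIntegral.integral_congr_ae ?_
  filter_upwards [Measure.ae_ne volume 0] with v hv _
  rw [← mul_dslope_exp, mul_div_cancel_left₀ _ hv]

lemma hasDerivAt_Ifun (s : ℝ) : HasDerivAt Ifun (dslope Real.exp 0 s) s := by
  rw [funext Ifun_eq_integral_dslope]
  exact (continuous_dslope_exp.integral_hasStrictDerivAt 0 s).hasDerivAt

lemma continuous_Ifun : Continuous Ifun :=
  continuous_iff_continuousAt.mpr fun s => (hasDerivAt_Ifun s).continuousAt

lemma Ifun_nonneg {s : ℝ} (hs : 0 ≤ s) : 0 ≤ Ifun s := by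
  rw [Ifun_eq_integral_dslope]
  exact intervalIntegral.integral_nonneg hs fun v _ => dslope_exp_nonneg v

lemma Ifun_le_exp {s : ℝ} (hs : 0 ≤ s) : Ifun s ≤ Real.exp s :=
  calc Ifun s = ∫ v in (0 : ℝ)..s, dslope Real.exp 0 v := Ifun_eq_integral_dslope s
    _ ≤ ∫ v in (0 : ℝ)..s, Real.exp v :=
        intervalIntegral.integral_mono_on hs (continuous_dslope_exp.intervalIntegrable _ _)
          (Real.continuous_exp.intervalIntegrable _ _) fun v hv => dslope_exp_le_exp hv.1
    _ = Real.exp s - 1 := by rw [integral_exp, Real.exp_zero]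
    _ ≤ Real.exp s := sub_le_self _ zero_le_one

/-- `(x^c - 1) / log x`, which is `x d/dx` of `x ↦ Ifun (c * log x)`; written with `dslope` so that
it takes the limiting value `c` at `x = 1`. -/
noncomputable def powSubOneDivLog (c x : ℝ) : ℝ :=
  c * dslope Real.exp 0 (c * Real.log x)

variable {c x : ℝ} {w : ℂ}

lemma exp_mul_log (c : ℝ) (hx : 0 < x) : Real.exp (c * Real.log x) = x ^ c := by
  rw [Real.rpow_def_of_pos hx, mul_comm]

lemma neg_log_mul_powSubOneDivLog (c : ℝ) (hx : 0 < x) :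
    -Real.log x * powSubOneDivLog c x = x ^ (0 : ℝ) - x ^ c := by
  rw [powSubOneDivLog, Real.rpow_zero]
  linear_combination -mul_dslope_exp (c * Real.log x) - exp_mul_log c hx

lemma powSubOneDivLog_nonneg (hc : 0 ≤ c) (x : ℝ) : 0 ≤ powSubOneDivLog c x :=
  mul_nonneg hc (dslope_exp_nonneg _)

lemma abs_powSubOneDivLog_le (hc : 0 ≤ c) (hx : 1 < x) : |powSubOneDivLog c x| ≤ c * x ^ c := by
  rw [abs_of_nonneg (powSubOneDivLog_nonneg hc x), ← exp_mul_log c (zero_lt_one.trans hx)]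
  exact mul_le_mul_of_nonneg_left
    (dslope_exp_le_exp (mul_nonneg hc (Real.log_nonneg hx.le))) hc

lemma measurable_powSubOneDivLog (c : ℝ) : Measurable (powSubOneDivLog c) :=
  (continuous_dslope_exp.measurable.comp (by fun_prop)).const_mul c

lemma mellinTailConvergent_powSubOneDivLog (hc : 0 ≤ c) (hw : c < w.re) :
    MellinTailConvergent (powSubOneDivLog c) w :=
  mellinTailConvergent_of_abs_le (measurable_powSubOneDivLog c)
    (fun _ => abs_powSubOneDivLog_le hc) hw

lemma measurable_Ifun_mul_log (c : ℝ) : Measurable fun x => Ifun (c * Real.log x) :=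
  continuous_Ifun.measurable.comp (by fun_prop)

lemma abs_Ifun_mul_log_le (hc : 0 ≤ c) (hx : 1 < x) : |Ifun (c * Real.log x)| ≤ 1 * x ^ c := by
  have hlog : 0 ≤ c * Real.log x := mul_nonneg hc (Real.log_nonneg hx.le)
  rw [abs_of_nonneg (Ifun_nonneg hlog), one_mul, ← exp_mul_log c (zero_lt_one.trans hx)]
  exact Ifun_le_exp hlog

lemma mellinTailConvergent_Ifun_mul_log (hc : 0 ≤ c) (hw : c < w.re) :
    MellinTailConvergent (fun x => Ifun (c * Real.log x)) w :=
  mellinTailConvergent_of_abs_le (measurable_Ifun_mul_log c) (fun _ => abs_Ifun_mul_log_le hc) hw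

lemma hasDerivAt_Ifun_mul_log (c : ℝ) (hx : x ≠ 0) :
    HasDerivAt (fun x => Ifun (c * Real.log x)) (powSubOneDivLog c x / x) x := by
  refine ((hasDerivAt_Ifun _).comp x ((Real.hasDerivAt_log hx).const_mul c)).congr_deriv ?_
  rw [powSubOneDivLog]
  ring

lemma mul_mellinTail_Ifun_mul_log (hc : 0 ≤ c) (hw : c < w.re) :
    w * mellinTail (fun x => Ifun (c * Real.log x)) w = mellinTail (powSubOneDivLog c) w := by
  rw [mul_mellinTail_eq_add_mellinTail (hasDerivAt_Ifun_mul_log c one_ne_zero).continuousAt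
    (fun x hx => hasDerivAt_Ifun_mul_log c (zero_lt_one.trans hx).ne')
    (fun _ => abs_Ifun_mul_log_le hc) hw (mellinTailConvergent_Ifun_mul_log hc hw)
    (mellinTailConvergent_powSubOneDivLog hc hw)]
  simp [Ifun]

lemma hasDerivAt_mellinTail_powSubOneDivLog (hc : 0 ≤ c) (hw : c < w.re) :
    HasDerivAt (mellinTail (powSubOneDivLog c)) (1 / w - 1 / (w - c)) w := by
  refine (hasDerivAt_mellinTail (measurable_powSubOneDivLog c)
    (fun x _ => powSubOneDivLog_nonneg hc x)
    (fun t ht => mellinTailConvergent_powSubOneDivLog hc ht) hw).congr_deriv ?_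
  have hw0 : 0 < w.re := hc.trans_lt hw
  rw [mellinTail_congr fun x hx => neg_log_mul_powSubOneDivLog c (zero_lt_one.trans hx),
    mellinTail_sub (mellinTailConvergent_rpow hw0) (mellinTailConvergent_rpow hw),
    mellinTail_rpow hw0, mellinTail_rpow hw, Complex.ofReal_zero, sub_zero]

lemma exists_cexp_mellinTail_powSubOneDivLog_eq (hc : 0 ≤ c) :
    ∃ C : ℂ, C ≠ 0 ∧ ∀ w : ℂ, c < w.re →
      Complex.exp (mellinTail (powSubOneDivLog c) w) = C * (w / (w - c)) := by
  have hne {w : ℂ} (hw : c < w.re) : w ≠ 0 ∧ w - c ≠ 0 :=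
    ⟨by exact_mod_cast ne_ofReal_of_lt_re (hc.trans_lt hw), sub_ne_zero.mpr (ne_ofReal_of_lt_re hw)⟩
  set E : ℂ → ℂ := fun w => Complex.exp (mellinTail (powSubOneDivLog c) w) * ((w - c) / w)
  have hE {w : ℂ} (hw : c < w.re) : HasDerivAt E 0 w := by
    obtain ⟨hw0, hwc⟩ := hne hw
    refine ((hasDerivAt_mellinTail_powSubOneDivLog hc hw).cexp.mul
      (((hasDerivAt_id w).sub_const (c : ℂ)).div (hasDerivAt_id w) hw0)).congr_deriv ?_
    simp only [id, Pi.div_apply]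
    field_simp
    ring
  have hb : c < ((c + 1 : ℝ) : ℂ).re := lt_add_one c
  obtain ⟨hb0, hbc⟩ := hne hb
  refine ⟨E (c + 1 : ℝ), mul_ne_zero (Complex.exp_ne_zero _) (div_ne_zero hbc hb0), fun w hw => ?_⟩
  obtain ⟨hw0, hwc⟩ := hne hw
  have hconst : E w = E (c + 1 : ℝ) := (isOpen_re_gt c).is_const_of_deriv_eq_zero
    (convex_halfSpace_re_gt c).isPreconnected
    (fun z hz => (hE hz).differentiableAt.differentiableWithinAt) (fun z hz => (hE hz).deriv) hw hb
  rw [← hconst]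
  simp only [E]
  field_simp

end ExponentialIntegral

section Oscillation

/-- The coefficient `Λ(n) / (n^{s₀} log n)` of `n^{-w}` in the Dirichlet series of `log ζ(w + s₀)`;
it is `0` at `n = 0` and `n = 1` because `x / 0 = 0`. -/
noncomputable def logZetaCoeff (s₀ : ℝ) (n : ℕ) : ℝ :=
  Λ n / ((n : ℝ) ^ s₀ * Real.log n)

variable {s₀ : ℝ}

lemma Delta_eq_summatory_sub (s₀ x : ℝ) :
    Delta s₀ x = summatory (logZetaCoeff s₀) x - Ifun ((1 - s₀) * Real.log x) :=
  rfl

lemma abs_logZetaCoeff_le_one (hs₀ : 0 ≤ s₀) (n : ℕ) : |logZetaCoeff s₀ n| ≤ 1 := by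
  have hlog : 0 ≤ Real.log n := Real.log_natCast_nonneg n
  rw [logZetaCoeff, abs_of_nonneg
    (div_nonneg ArithmeticFunction.vonMangoldt_nonneg (by positivity))]
  refine div_le_one_of_le₀ ?_ (by positivity)
  rcases n.eq_zero_or_pos with rfl | hn
  · simp
  · calc Λ n ≤ Real.log n := ArithmeticFunction.vonMangoldt_le_log
      _ ≤ (n : ℝ) ^ s₀ * Real.log n :=
        le_mul_of_one_le_left hlog (Real.one_le_rpow (Nat.one_le_cast.mpr hn) hs₀)

lemma LSeries_logZetaCoeff (s₀ : ℝ) (w : ℂ) :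
    LSeries (fun n => (logZetaCoeff s₀ n : ℂ)) w =
      LSeries (fun n : ℕ => (Λ n : ℂ) / (Real.log n : ℂ)) (w + s₀) := by
  refine tsum_congr fun n => ?_
  rcases eq_or_ne n 0 with rfl | hn
  · simp
  rw [LSeries.term_of_ne_zero hn, LSeries.term_of_ne_zero hn, logZetaCoeff,
    Complex.cpow_add _ _ (Nat.cast_ne_zero.mpr hn), Complex.ofReal_div, Complex.ofReal_mul,
    Complex.ofReal_cpow n.cast_nonneg, Complex.ofReal_natCast]
  ring

lemma cexp_mul_mellinTail_summatory_logZetaCoeff (hs₀ : 0 ≤ s₀) {w : ℂ} (hw : 1 < w.re) :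
    Complex.exp (w * mellinTail (summatory (logZetaCoeff s₀)) w) = riemannZeta (w + s₀) := by
  have hre : 1 < (w + s₀).re := by
    rw [Complex.add_re, Complex.ofReal_re]
    linarith
  rw [← LSeries_eq_mul_mellinTail_summatory (abs_logZetaCoeff_le_one hs₀) hw,
    LSeries_logZetaCoeff, riemannZeta_eq_exp_LSeries hre]

lemma measurable_Delta (s₀ : ℝ) : Measurable (Delta s₀) :=
  (measurable_summatory _).sub (measurable_Ifun_mul_log (1 - s₀))

lemma abs_Delta_le (hs₀0 : 0 ≤ s₀) (hs₀1 : s₀ ≤ 1) {x : ℝ} (hx : 1 < x) :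
    |Delta s₀ x| ≤ 2 * x ^ (1 : ℝ) :=
  calc |Delta s₀ x|
      ≤ |summatory (logZetaCoeff s₀) x| + |Ifun ((1 - s₀) * Real.log x)| := abs_sub _ _
    _ ≤ 1 * x ^ (1 : ℝ) + 1 * x ^ (1 - s₀) := add_le_add
        (abs_summatory_le_mul_rpow_one (abs_logZetaCoeff_le_one hs₀0) (zero_le_one.trans hx.le))
        (abs_Ifun_mul_log_le (sub_nonneg.mpr hs₀1) hx)
    _ ≤ 1 * x ^ (1 : ℝ) + 1 * x ^ (1 : ℝ) := by
        gcongr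
        · exact hx.le
        · linarith
    _ = 2 * x ^ (1 : ℝ) := by ring

lemma mellinTail_Delta (hs₀0 : 0 ≤ s₀) (hs₀1 : s₀ ≤ 1) {w : ℂ} (hw : 1 < w.re) :
    mellinTail (Delta s₀) w = mellinTail (summatory (logZetaCoeff s₀)) w -
      mellinTail (fun x => Ifun ((1 - s₀) * Real.log x)) w := by
  rw [mellinTail_congr fun x _ => Delta_eq_summatory_sub s₀ x,
    mellinTail_sub (mellinTailConvergent_summatory (abs_logZetaCoeff_le_one hs₀0) hw)
      (mellinTailConvergent_Ifun_mul_log (by linarith) (by linarith))]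

lemma exists_cexp_mul_mellinTail_Delta_eq (hs₀0 : 0 ≤ s₀) (hs₀1 : s₀ ≤ 1) :
    ∃ C : ℂ, C ≠ 0 ∧ ∀ w : ℂ, 1 < w.re →
      Complex.exp (w * mellinTail (Delta s₀) w) = C * riemannZeta₁ (w + s₀) / w := by
  have hc : 0 ≤ 1 - s₀ := sub_nonneg.mpr hs₀1
  obtain ⟨C, hC, hexp⟩ := exists_cexp_mellinTail_powSubOneDivLog_eq hc
  refine ⟨C⁻¹, inv_ne_zero hC, fun w hw => ?_⟩
  have hwc : 1 - s₀ < w.re := by linarith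
  have hshift : w - (1 - s₀ : ℝ) = w + s₀ - 1 := by
    push_cast
    ring
  have hpole : w + s₀ ≠ 1 := by
    rw [← sub_ne_zero, ← hshift]
    exact sub_ne_zero.mpr (ne_ofReal_of_lt_re hwc)
  rw [mellinTail_Delta hs₀0 hs₀1 hw, mul_sub, Complex.exp_sub,
    cexp_mul_mellinTail_summatory_logZetaCoeff hs₀0 hw, mul_mellinTail_Ifun_mul_log hc hwc,
    hexp w hwc, hshift, riemannZeta₁_eq_sub_one_mul hpole]
  field_simp

theorem frequently_rpow_lt_mul_Delta {α σ : ℝ} (hs₀0 : 0 ≤ s₀) (hs₀1 : s₀ ≤ 1) (hα : 0 ≤ α)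
    (hσ : σ ≠ 0) {ρ : ℂ} (hρ : riemannZeta₁ ρ = 0) (hρre : s₀ + α < ρ.re) :
    ∃ᶠ x in atTop, x ^ α < σ * Delta s₀ x := by
  obtain ⟨C, hC, hexp⟩ := exists_cexp_mul_mellinTail_Delta_eq hs₀0 hs₀1
  have hne {w : ℂ} (hw : α < w.re) : w ≠ 0 := by
    exact_mod_cast ne_ofReal_of_lt_re (hα.trans_lt hw)
  have hosc := frequently_mul_rpow_lt_of_cexp_mul_mellinTail_eq (D := fun x => σ * Delta s₀ x)
    (H := fun w => C * riemannZeta₁ (w + s₀) / w) (k := (σ : ℂ)⁻¹) (ρ := ρ - s₀) (M := |σ| * 2)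
    (β := 1) ((measurable_Delta s₀).const_mul σ) (fun x hx => ?_) hα
    (inv_ne_zero (Complex.ofReal_ne_zero.mpr hσ)) (fun w hw => ?_) (fun x hx => ?_)
    (fun w hw => ?_) ?_ ?_ 1
  · simpa only [one_mul] using hosc
  · rw [abs_mul, mul_assoc]
    exact mul_le_mul_of_nonneg_left (abs_Delta_le hs₀0 hs₀1 hx) (abs_nonneg σ)
  · have := differentiable_riemannZeta₁
    exact DifferentiableAt.differentiableWithinAt (by fun_prop (disch := exact hne hw))
  · have hzeta := riemannZeta₁_ofReal_ne_zero (by linarith : 0 < x + s₀)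
    rw [Complex.ofReal_add] at hzeta
    exact div_ne_zero (mul_ne_zero hC hzeta) (hne hx)
  · rw [mellinTail_const_mul, ← hexp w hw]
    congr 1
    field_simp [Complex.ofReal_ne_zero.mpr hσ]
  · rw [Complex.sub_re, Complex.ofReal_re]
    linarith
  · simp only [sub_add_cancel, hρ, mul_zero, zero_div]

lemma Theta_le_one : Theta ≤ 1 := by
  refine Real.sSup_le ?_ zero_le_one
  rintro _ ⟨z, ⟨-, -, hz⟩, rfl⟩
  exact hz.le

lemma exists_riemannZeta₁_eq_zero_of_lt_Theta {b : ℝ} (hΘ : 0 < Theta) (hb : b < Theta) :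
    ∃ ρ : ℂ, riemannZeta₁ ρ = 0 ∧ b < ρ.re := by
  have hne : (Complex.re '' {z : ℂ | riemannZeta z = 0 ∧ 0 < z.re ∧ z.re < 1}).Nonempty := by
    by_contra hempty
    rw [Theta, not_nonempty_iff_eq_empty.mp hempty, Real.sSup_empty] at hΘ
    exact lt_irrefl _ hΘ
  obtain ⟨_, ⟨ρ, ⟨hρ, -, hρ1⟩, rfl⟩, hbρ⟩ := exists_lt_of_lt_csSup hne hb
  have hρne : ρ ≠ 1 := by
    rintro rfl
    exact lt_irrefl _ hρ1
  exact ⟨ρ, by rw [riemannZeta₁_eq_sub_one_mul hρne, hρ, mul_zero], hbρ⟩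

theorem frequently_rpow_Theta_sub_lt_mul_Delta (hs₀0 : 0 < s₀) (hs₀Θ : s₀ < Theta) {ε σ : ℝ}
    (hε : 0 < ε) (hσ : σ ≠ 0) : ∃ᶠ x in atTop, x ^ (Theta - s₀ - ε) < σ * Delta s₀ x := by
  set δ := min ε (Theta - s₀)
  have hδ0 : 0 < δ := lt_min hε (sub_pos.mpr hs₀Θ)
  have hδΘ : δ ≤ Theta - s₀ := min_le_right _ _
  obtain ⟨ρ, hρ, hρre⟩ := exists_riemannZeta₁_eq_zero_of_lt_Theta (hs₀0.trans hs₀Θ)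
    (sub_lt_self Theta hδ0)
  have hosc := frequently_rpow_lt_mul_Delta (α := Theta - s₀ - δ) hs₀0.le
    (hs₀Θ.le.trans Theta_le_one) (by linarith) hσ hρ (by linarith)
  refine (hosc.and_eventually (eventually_ge_atTop 1)).mono fun x ⟨hx, hx1⟩ => hx.trans_le' ?_
  gcongr
  exact min_le_left _ _

end Oscillation

/-- Oscillation result: for fixed `s₀ ∈ (0,Θ)` and `ε > 0`,
`Δ(x) = Ω_±(x^{Θ-s₀-ε})`. -/
theorem stmt17 (s₀ : ℝ) (hs₀0 : 0 < s₀) (hs₀Θ : s₀ < Theta) (ε : ℝ) (hε : 0 < ε) :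
    ∀ X : ℝ, ∃ x₁ x₂ : ℝ, X ≤ x₁ ∧ X ≤ x₂ ∧
      x₁ ^ (Theta - s₀ - ε) < Delta s₀ x₁ ∧
      Delta s₀ x₂ < -(x₂ ^ (Theta - s₀ - ε)) := by
  intro X
  obtain ⟨x₁, hx₁, hpos⟩ := frequently_atTop.mp
    (frequently_rpow_Theta_sub_lt_mul_Delta hs₀0 hs₀Θ hε one_ne_zero) X
  obtain ⟨x₂, hx₂, hneg⟩ := frequently_atTop.mp
    (frequently_rpow_Theta_sub_lt_mul_Delta hs₀0 hs₀Θ hε (neg_ne_zero.mpr one_ne_zero)) X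
  exact ⟨x₁, x₂, hx₁, hx₂, by linarith, by linarith⟩
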